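/- arXiv:1710.10892 — 4 statements merged into one kernel-verified Lean document; each statement's English description precedes it below -/
import Mathlib

section
/- Let s = (s_1,…,s_n) be a sequence of positive integers. The s-lecture hall polytope P_n^(s) is level if and only if the (s_1,…,s_n,1)-lecture hall polytope P_{n+1}^{(s,1)} is level. -/
open scoped BigOperators

noncomputable section

/-- The `s`-lecture hall polytope
`P_n^(s) = { x ∈ ℝ^n : 0 ≤ x_1/s_1 ≤ x_2/s_2 ≤ ⋯ ≤ x_n/s_n ≤ 1 }` (indices 0-based in Lean). -/
def lhp (n : ℕ) (s : Fin n → ℤ) : Set (Fin n → ℝ) :=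
  {x | (∀ i : Fin n, (i : ℕ) = 0 → 0 ≤ x i / (s i : ℝ)) ∧
       (∀ i j : Fin n, (j : ℕ) = (i : ℕ) + 1 → x i / (s i : ℝ) ≤ x j / (s j : ℝ)) ∧
       (∀ i : Fin n, (i : ℕ) = n - 1 → x i / (s i : ℝ) ≤ 1)}

/-- The vertex `(0,…,0,s_i,s_{i+1},…,s_n)` of the lecture hall polytope (real version). -/
def lhpVertexR (n : ℕ) (s : Fin n → ℤ) (i : Fin n) : Fin n → ℝ :=
  fun j => if i ≤ j then (s j : ℝ) else 0

/-- The vertex `(0,…,0,s_i,s_{i+1},…,s_n)` of the lecture hall polytope (integer version). -/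
def lhpVertexZ (n : ℕ) (s : Fin n → ℤ) (i : Fin n) : Fin n → ℤ :=
  fun j => if i ≤ j then s j else 0

/-- `cone(P_n^(s)) = span_{ℝ≥0} { (v,1) : v a vertex of P_n^(s) } ⊆ ℝ^{n+1}`:
the set of nonnegative combinations of `(0,1)` and the `(v_i,1)`. -/
def lhpCone (n : ℕ) (s : Fin n → ℤ) : Set (Fin (n + 1) → ℝ) :=
  {x | ∃ (a : ℝ) (b : Fin n → ℝ), 0 ≤ a ∧ (∀ i, 0 ≤ b i) ∧
      x = a • (Fin.snoc (0 : Fin n → ℝ) 1 : Fin (n + 1) → ℝ) +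
        ∑ i : Fin n, b i • (Fin.snoc (lhpVertexR n s i) 1 : Fin (n + 1) → ℝ)}

/-- Lattice points of `cone(P_n^(s))`. -/
def lhpConeZ (n : ℕ) (s : Fin n → ℤ) : Set (Fin (n + 1) → ℤ) :=
  {x | (fun i => (x i : ℝ)) ∈ lhpCone n s}

/-- Lattice points of the (relative) interior of `cone(P_n^(s))`
(the cone is full-dimensional, so the relative interior is the interior). -/
def lhpConeInteriorZ (n : ℕ) (s : Fin n → ℤ) : Set (Fin (n + 1) → ℤ) :=
  {x | (fun i => (x i : ℝ)) ∈ interior (lhpCone n s)}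

/-- `P_n^(s)` is Gorenstein: some integer point `c` satisfies
`c + (cone(P) ∩ ℤ^{n+1}) = cone(P)° ∩ ℤ^{n+1}`. -/
def IsGorenstein (n : ℕ) (s : Fin n → ℤ) : Prop :=
  ∃ c : Fin (n + 1) → ℤ,
    (fun x => c + x) '' lhpConeZ n s = lhpConeInteriorZ n s

/-- `P_n^(s)` is level: finitely many integer points `c_1,…,c_m`, all with the same
last coordinate, satisfy `⋃ (c_i + (cone(P) ∩ ℤ^{n+1})) = cone(P)° ∩ ℤ^{n+1}`. -/
def IsLevel (n : ℕ) (s : Fin n → ℤ) : Prop :=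
  ∃ C : Finset (Fin (n + 1) → ℤ), C.Nonempty ∧
    (∀ c ∈ C, ∀ c' ∈ C, c (Fin.last n) = c' (Fin.last n)) ∧
    (⋃ c ∈ C, (fun x => c + x) '' lhpConeZ n s) = lhpConeInteriorZ n s

/-- The `t`-lecture hall cone `C_m^(t) = { x ∈ ℝ^m : 0 ≤ x_1/t_1 ≤ ⋯ ≤ x_m/t_m }`. -/
def lhCone (m : ℕ) (t : Fin m → ℤ) : Set (Fin m → ℝ) :=
  {x | (∀ i : Fin m, (i : ℕ) = 0 → 0 ≤ x i / (t i : ℝ)) ∧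
       (∀ i j : Fin m, (j : ℕ) = (i : ℕ) + 1 → x i / (t i : ℝ) ≤ x j / (t j : ℝ))}

/-- `e` is an `s`-inversion sequence: `0 ≤ e_i < s_i` for all `i`. -/
def IsInvSeq (n : ℕ) (s : Fin n → ℤ) (e : Fin n → ℤ) : Prop :=
  ∀ i, 0 ≤ e i ∧ e i < s i

/-- The ratio `e_i / s_i` as a rational number. -/
def invRatio (n : ℕ) (s e : Fin n → ℤ) (i : Fin n) : ℚ := (e i : ℚ) / (s i : ℚ)

/-- The ratio `e_{i-1}/s_{i-1}`, with the convention `e_0 = 0`, `s_0 = 1`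
(paper 1-based indexing; here 0-based). -/
def prevRatio (n : ℕ) (s e : Fin n → ℤ) (i : Fin n) : ℚ :=
  if (i : ℕ) = 0 then 0
  else invRatio n s e ⟨(i : ℕ) - 1, lt_of_le_of_lt (Nat.sub_le _ _) i.isLt⟩

/-- The ascent set `Asc(e) ⊆ {0,…,n-1}` of an inversion sequence. -/
def ascSet (n : ℕ) (s e : Fin n → ℤ) : Finset (Fin n) :=
  Finset.univ.filter fun i => prevRatio n s e i < invRatio n s e i

/-- The number of ascents of an inversion sequence. -/
def asc (n : ℕ) (s e : Fin n → ℤ) : ℕ := (ascSet n s e).card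

/-- Addition of inversion sequences: componentwise mod `s_i`,
with representative in `{0,…,s_i - 1}`. -/
def invAdd (n : ℕ) (s : Fin n → ℤ) (e e' : Fin n → ℤ) : Fin n → ℤ :=
  fun i => (e i + e' i) % s i

/-- `hStar n s k = # I_{n,k}^(s)`, the number of `s`-inversion sequences with `k` ascents
(the `k`-th coefficient of the `s`-Eulerian polynomial). -/
def hStar (n : ℕ) (s : Fin n → ℤ) (k : ℕ) : ℕ :=
  Nat.card {e : Fin n → ℤ // IsInvSeq n s e ∧ asc n s e = k}

/-- `s` is `u`-generated by a sequence `u` of positive integers: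
`s_2 = u_1 s_1 - 1` and `s_{i+1} = u_i s_i - s_{i-1}` for `i > 1`. -/
def IsUGenerated (n : ℕ) (s : Fin n → ℤ) : Prop :=
  ∃ u : Fin n → ℤ,
    (∀ i : Fin n, (i : ℕ) < n - 1 → 0 < u i) ∧
    (∀ k j : Fin n, (j : ℕ) = (k : ℕ) + 1 → (k : ℕ) = 0 → s j = u k * s k - 1) ∧
    (∀ a k j : Fin n, (k : ℕ) = (a : ℕ) + 1 → (j : ℕ) = (k : ℕ) + 1 →
      s j = u k * s k - s a)

/-- The (half-open) fundamental parallelepiped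
`Π = { Σ η_i (v_i,1) : 0 ≤ η_i < 1 }` of `P_n^(s)`. -/
def fpp (n : ℕ) (s : Fin n → ℤ) : Set (Fin (n + 1) → ℝ) :=
  {x | ∃ (a : ℝ) (b : Fin n → ℝ),
      (0 ≤ a ∧ a < 1) ∧ (∀ i, 0 ≤ b i ∧ b i < 1) ∧
      x = a • (Fin.snoc (0 : Fin n → ℝ) 1 : Fin (n + 1) → ℝ) +
        ∑ i : Fin n, b i • (Fin.snoc (lhpVertexR n s i) 1 : Fin (n + 1) → ℝ)}

/-- The lattice point `λ(e) ∈ ℤ^{n+1}` associated to an inversion sequence `e`: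
`λ(e)_j = ℓ_j s_j - e_j` with `ℓ_j = #(Asc(e) ∩ {0,…,j-1})` (paper 1-based `j`),
and last coordinate `asc(e)`. -/
def lamOf (n : ℕ) (s : Fin n → ℤ) (e : Fin n → ℤ) : Fin (n + 1) → ℤ :=
  Fin.snoc
    (fun j : Fin n =>
      (((ascSet n s e).filter fun i : Fin n => (i : ℕ) ≤ (j : ℕ)).card : ℤ) * s j - e j)
    (asc n s e : ℤ)

/-- A coefficient sequence `h` (of a polynomial `Σ h_j z^j` of degree `r`) is palindromic:
`h_r ≠ 0`, `h_k = 0` for `k > r`, and `h_j = h_{r-j}` for `0 ≤ j ≤ r`. -/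
def IsPalindromic (h : ℕ → ℕ) : Prop :=
  ∃ r : ℕ, h r ≠ 0 ∧ (∀ k, r < k → h k = 0) ∧ ∀ j, j ≤ r → h j = h (r - j)

end

/-!
`P_{n+1}^{(s,1)}` is the unimodular pyramid with apex `0` over `P_n^(s)` placed at height `1`, so a
unimodular change of coordinates splits its cone as `cone(P_n^(s)) × [0, ∞)`. On lattice points, a
factor `ℕ` with interior `ℕ_{>0} = 1 + ℕ` does not affect levelness: generators `c` of the base give
generators `(c, 1)`, and conversely the points `(w, 1)` can only be reached from generators of the
form `(c, 1)`.
-/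

section LevelOver

open scoped Pointwise

variable {G H : Type*}

/-- The algebraic content of levelness: `I` is a union of translates of `K` by finitely many
elements of one common degree. A lattice polytope is level when `K` and `I` are the lattice points
of its cone and of the interior of its cone, and `deg` is the last coordinate. -/
def IsLevelOver [Add G] {ι : Type*} (deg : G → ι) (K I : Set G) : Prop :=
  ∃ C : Finset G, C.Nonempty ∧ (∀ c ∈ C, ∀ c' ∈ C, deg c = deg c') ∧ (C : Set G) + K = I

theorem IsLevelOver.preimage [Add G] [Add H] {ι : Type*} {deg : G → ι} {K I : Set G}
    (h : IsLevelOver deg K I) (e : H ≃+ G) :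
    IsLevelOver (deg ∘ e) (e ⁻¹' K) (e ⁻¹' I) := by
  obtain ⟨C, hC, hdeg, rfl⟩ := h
  refine ⟨C.map e.symm.toEquiv.toEmbedding, hC.map, fun c hc c' hc' => ?_, ?_⟩
  · exact hdeg _ (Finset.mem_map_equiv.1 hc) _ (Finset.mem_map_equiv.1 hc')
  · have preimage_eq (A : Set G) : e ⁻¹' A = e.symm '' A :=
      (e.symm.toEquiv.image_eq_preimage_symm A).symm
    rw [preimage_eq, preimage_eq, Set.image_add, Finset.coe_map]
    rfl

theorem isLevelOver_preimage_iff [Add G] [Add H] {ι : Type*} {deg : G → ι} {K I : Set G}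
    (e : H ≃+ G) :
    IsLevelOver (deg ∘ e) (e ⁻¹' K) (e ⁻¹' I) ↔ IsLevelOver deg K I := by
  refine ⟨fun h => ?_, fun h => h.preimage e⟩
  simpa [Function.comp_def, Set.preimage_preimage] using h.preimage e.symm

theorem IsLevelOver.prod_Ici [Add G] {deg : G → ℤ} {K I : Set G} (h : IsLevelOver deg K I) :
    IsLevelOver (fun p : G × ℤ => deg p.1 + p.2) (K ×ˢ Set.Ici 0) (I ×ˢ Set.Ioi 0) := by
  obtain ⟨C, hC, hdeg, rfl⟩ := h
  refine ⟨C ×ˢ {1}, hC.product (Finset.singleton_nonempty 1), ?_, ?_⟩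
  · rintro ⟨c, t⟩ hc ⟨c', t'⟩ hc'
    simp only [Finset.mem_product, Finset.mem_singleton] at hc hc'
    exact congrArg₂ (· + ·) (hdeg c hc.1 c' hc'.1) (hc.2.trans hc'.2.symm)
  · have one_add_Ici : ({1} : Set ℤ) + Set.Ici 0 = Set.Ioi 0 := by
      rw [Set.singleton_add, Set.image_const_add_Ici, add_zero]
      ext t
      exact Order.one_le_iff_pos (x := t)
    rw [Finset.coe_product, Finset.coe_singleton, Set.prod_add_prod_comm, one_add_Ici]

theorem IsLevelOver.of_prod_Ici [AddZeroClass G] {deg : G → ℤ} {K I : Set G} (hK : 0 ∈ K)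
    (h : IsLevelOver (fun p : G × ℤ => deg p.1 + p.2) (K ×ˢ Set.Ici 0) (I ×ˢ Set.Ioi 0)) :
    IsLevelOver deg K I := by
  obtain ⟨C, ⟨p, hp⟩, hdeg, hCI⟩ := h
  have add_mem {q : G × ℤ} (hq : q ∈ C) {k : G} (hk : k ∈ K) : q.1 + k ∈ I ∧ 0 < q.2 := by
    have : q + (k, 0) ∈ I ×ˢ Set.Ioi 0 := hCI ▸ Set.add_mem_add hq ⟨hk, Set.self_mem_Ici⟩
    simpa using this
  let D : Finset G := C.preimage (fun c => (c, 1)) (Prod.mk_left_injective 1).injOn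
  have hDI : (D : Set G) + K = I := by
    apply Set.Subset.antisymm
    · rintro _ ⟨c, hc, k, hk, rfl⟩
      exact (add_mem (Finset.mem_preimage.1 hc) hk).1
    · intro w hw
      have w_one_mem : (w, 1) ∈ (C : Set (G × ℤ)) + K ×ˢ Set.Ici 0 :=
        hCI ▸ ⟨hw, Set.mem_Ioi.2 one_pos⟩
      obtain ⟨⟨c, t⟩, hc, ⟨k, u⟩, ⟨hk, hu⟩, heq⟩ := w_one_mem
      obtain ⟨hck, htu⟩ := Prod.mk.inj heq
      have t_pos : 0 < t := (add_mem hc hk).2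
      have u_nonneg : 0 ≤ u := hu
      obtain rfl : t = 1 := by lia
      exact ⟨c, Finset.mem_preimage.2 hc, k, hk, hck⟩
  have hD : (D : Set G).Nonempty :=
    Set.Nonempty.of_add_left (t := K) (hDI.symm ▸ ⟨_, (add_mem hp hK).1⟩)
  refine ⟨D, hD, fun c hc c' hc' => ?_, hDI⟩
  exact add_right_cancel (hdeg _ (Finset.mem_preimage.1 hc) _ (Finset.mem_preimage.1 hc'))

theorem isLevelOver_prod_Ici_iff [AddZeroClass G] {deg : G → ℤ} {K I : Set G} (hK : 0 ∈ K) :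
    IsLevelOver (fun p : G × ℤ => deg p.1 + p.2) (K ×ˢ Set.Ici 0) (I ×ˢ Set.Ioi 0) ↔
      IsLevelOver deg K I :=
  ⟨.of_prod_Ici hK, .prod_Ici⟩

theorem isLevel_iff_isLevelOver (n : ℕ) (s : Fin n → ℤ) :
    IsLevel n s ↔
      IsLevelOver (fun x => x (Fin.last n)) (lhpConeZ n s) (lhpConeInteriorZ n s) := by
  simp only [IsLevel, IsLevelOver, ← Set.iUnion_add_left_image, Finset.mem_coe]

end LevelOver

theorem zero_mem_lhpConeZ (n : ℕ) (s : Fin n → ℤ) : 0 ∈ lhpConeZ n s :=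
  ⟨0, 0, le_rfl, fun _ => le_rfl, by ext; simp⟩

section PyramidEquiv

/-- The unimodular coordinates `(x_0, …, x_{n+1}) ↦ ((x_0, …, x_n), x_{n+1} - x_n)` which split the
cone over a pyramid into the cone over its base and the ray through its apex. They are used over
`ℝ` for cones and over `ℤ` for lattice points. -/
def pyramidEquiv (R : Type*) [Ring R] (n : ℕ) :
    (Fin (n + 2) → R) ≃ₗ[R] (Fin (n + 1) → R) × R where
  toFun x := (Fin.init x, x (Fin.last (n + 1)) - x (Fin.last n).castSucc)
  invFun p := Fin.snoc p.1 (p.1 (Fin.last n) + p.2)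
  map_add' x y := Prod.ext rfl (add_sub_add_comm _ _ _ _)
  map_smul' a x := Prod.ext rfl (mul_sub _ _ _).symm
  left_inv x := by simp [Fin.init]
  right_inv p := by simp

variable {R : Type*} [Ring R] {n : ℕ}

theorem pyramidEquiv_apply (x : Fin (n + 2) → R) :
    pyramidEquiv R n x = (Fin.init x, x (Fin.last (n + 1)) - x (Fin.last n).castSucc) :=
  rfl

theorem pyramidEquiv_fst_last_add_snd (x : Fin (n + 2) → R) :
    (pyramidEquiv R n x).1 (Fin.last n) + (pyramidEquiv R n x).2 = x (Fin.last (n + 1)) :=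
  add_sub_cancel _ _

theorem pyramidEquiv_intCast (x : Fin (n + 2) → ℤ) :
    pyramidEquiv R n (fun i => (x i : R)) =
      (fun i => ((pyramidEquiv ℤ n x).1 i : R), ((pyramidEquiv ℤ n x).2 : R)) :=
  Prod.ext rfl (Int.cast_sub _ _).symm

theorem pyramidEquiv_snoc (x : Fin (n + 1) → R) (z : R) :
    pyramidEquiv R n (Fin.snoc x z : Fin (n + 2) → R) = (x, z - x (Fin.last n)) := by
  simp [pyramidEquiv_apply]

end PyramidEquiv

section Cone

variable (n : ℕ) (s : Fin n → ℤ)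

theorem lhpVertexR_snoc_castSucc (t : ℤ) (i : Fin n) :
    lhpVertexR (n + 1) (Fin.snoc s t) i.castSucc = Fin.snoc (lhpVertexR n s i) (t : ℝ) := by
  ext j
  cases j using Fin.lastCases <;> simp [lhpVertexR, Fin.le_last]

theorem lhpVertexR_snoc_last (t : ℤ) :
    lhpVertexR (n + 1) (Fin.snoc s t) (Fin.last n) = Fin.snoc 0 (t : ℝ) := by
  ext j
  cases j using Fin.lastCases <;> simp [lhpVertexR, Fin.last_le_iff]

theorem pyramidEquiv_lhpCone_combination (a : ℝ) (b : Fin (n + 1) → ℝ) :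
    pyramidEquiv ℝ n (a • (Fin.snoc 0 1 : Fin (n + 2) → ℝ) +
        ∑ i, b i • (Fin.snoc (lhpVertexR (n + 1) (Fin.snoc s 1) i) 1 : Fin (n + 2) → ℝ)) =
      (b (Fin.last n) • (Fin.snoc 0 1 : Fin (n + 1) → ℝ) +
        ∑ i : Fin n, b i.castSucc • (Fin.snoc (lhpVertexR n s i) 1 : Fin (n + 1) → ℝ), a) := by
  simp only [map_add, map_smul, map_sum, pyramidEquiv_snoc, Fin.sum_univ_castSucc,
    lhpVertexR_snoc_castSucc, lhpVertexR_snoc_last, Int.cast_one, Fin.snoc_last, sub_self]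
  ext <;> simp [Prod.fst_sum, Prod.snd_sum, add_comm]

theorem lhpCone_snoc_one :
    lhpCone (n + 1) (Fin.snoc s 1) = pyramidEquiv ℝ n ⁻¹' (lhpCone n s ×ˢ Set.Ici 0) := by
  ext x
  constructor
  · rintro ⟨a, b, ha, hb, rfl⟩
    rw [Set.mem_preimage, pyramidEquiv_lhpCone_combination]
    exact ⟨⟨b (Fin.last n), fun i => b i.castSucc, hb _, fun i => hb _, rfl⟩, ha⟩
  · rintro ⟨⟨a, b, ha, hb, hbase⟩, hapex⟩
    refine ⟨(pyramidEquiv ℝ n x).2, Fin.snoc b a, hapex,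
      Fin.lastCases (by simpa using ha) (by simpa using hb), (pyramidEquiv ℝ n).injective ?_⟩
    rw [pyramidEquiv_lhpCone_combination]
    ext1
    · simpa only [Fin.snoc_last, Fin.snoc_castSucc] using hbase
    · rfl

theorem interior_lhpCone_snoc_one :
    interior (lhpCone (n + 1) (Fin.snoc s 1)) =
      pyramidEquiv ℝ n ⁻¹' (interior (lhpCone n s) ×ˢ Set.Ioi 0) := by
  rw [lhpCone_snoc_one, ← interior_Ici, ← interior_prod_eq]
  exact ((pyramidEquiv ℝ n).toContinuousLinearEquiv.toHomeomorph.preimage_interior _).symm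

theorem lhpConeZ_snoc_one :
    lhpConeZ (n + 1) (Fin.snoc s 1) = pyramidEquiv ℤ n ⁻¹' (lhpConeZ n s ×ˢ Set.Ici 0) := by
  ext x
  simp [lhpConeZ, lhpCone_snoc_one, pyramidEquiv_intCast]

theorem lhpConeInteriorZ_snoc_one :
    lhpConeInteriorZ (n + 1) (Fin.snoc s 1) =
      pyramidEquiv ℤ n ⁻¹' (lhpConeInteriorZ n s ×ˢ Set.Ioi 0) := by
  ext x
  simp [lhpConeInteriorZ, interior_lhpCone_snoc_one, pyramidEquiv_intCast]

end Cone

theorem lhp_level_iff_snoc_one_general (n : ℕ) (s : Fin n → ℤ) :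
    IsLevel n s ↔ IsLevel (n + 1) (Fin.snoc s 1) := by
  let baseDeg : (Fin (n + 1) → ℤ) → ℤ := fun x => x (Fin.last n)
  let deg : (Fin (n + 1) → ℤ) × ℤ → ℤ := fun p => baseDeg p.1 + p.2
  have last_eq_deg : (fun x : Fin (n + 2) → ℤ => x (Fin.last (n + 1))) = deg ∘ pyramidEquiv ℤ n :=
    funext fun x => (pyramidEquiv_fst_last_add_snd x).symm
  calc IsLevel n s
    _ ↔ IsLevelOver baseDeg (lhpConeZ n s) (lhpConeInteriorZ n s) := isLevel_iff_isLevelOver n s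
    _ ↔ IsLevelOver deg (lhpConeZ n s ×ˢ Set.Ici 0) (lhpConeInteriorZ n s ×ˢ Set.Ioi 0) :=
      (isLevelOver_prod_Ici_iff (zero_mem_lhpConeZ n s)).symm
    _ ↔ IsLevelOver (deg ∘ pyramidEquiv ℤ n) (lhpConeZ (n + 1) (Fin.snoc s 1))
          (lhpConeInteriorZ (n + 1) (Fin.snoc s 1)) := by
      rw [lhpConeZ_snoc_one, lhpConeInteriorZ_snoc_one]
      exact (isLevelOver_preimage_iff (pyramidEquiv ℤ n).toAddEquiv).symm
    _ ↔ IsLevel (n + 1) (Fin.snoc s 1) := by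
      rw [isLevel_iff_isLevelOver, last_eq_deg]

theorem lhp_level_iff_snoc_one (n : ℕ) (s : Fin n → ℤ) (hs : ∀ i, 0 < s i) :
    IsLevel n s ↔ IsLevel (n + 1) (Fin.snoc s 1) :=
  lhp_level_iff_snoc_one_general n s
end

section
/- Let s = (s_1,…,s_n) and t = (t_1,…,t_m) be sequences of positive integers. If both P_n^(s) and P_m^(t) are level, then the (s_1,…,s_n,1,t_1,…,t_m)-lecture hall polytope P_{n+m+1}^{(s,1,t)} is level. -/
open scoped BigOperators

/-!
The cone over `P_n^(s)` consists of the points `x` with `x_j = u_j (b_0 + ⋯ + b_j)` for some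
`b ≥ 0`, where `u = (s, 1)`. Since `u` ends in `1`, the last coordinate of such a point is the
total `∑ b_i`, which is exactly the amount by which the partial sums on the second block of a
concatenation `(u, v)` exceed those computed from `v` alone. Hence `(x, z) ↦ (x, z + x_last • v)`
carries the product of the cones of `u` and `v` onto the cone of `(u, v)`. This map is a unimodular
shear, so it also matches lattice points and interiors. For `v = (t, 1)` the last coordinate of
the image is the sum of those of `x` and `z`, and levelness passes to products.
-/

section Level

open scoped Pointwise

variable {G H D : Type*}

/-- Levelness of a pair of subsets of a graded additive structure, modelled on `M` the lattice
points of a cone and `I` those of its interior: `I` is generated over `M` by finitely many elements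
of equal degree. -/
def IsLevelPair [Add G] (deg : G → D) (M I : Set G) : Prop :=
  ∃ C : Finset G, C.Nonempty ∧ (∀ c ∈ C, ∀ c' ∈ C, deg c = deg c') ∧ (C : Set G) + M = I

theorem isLevel_iff_isLevelPair (n : ℕ) (s : Fin n → ℤ) :
    IsLevel n s ↔
      IsLevelPair (fun x => x (Fin.last n)) (lhpConeZ n s) (lhpConeInteriorZ n s) := by
  simp only [IsLevel, IsLevelPair, ← Set.iUnion_add_left_image, Finset.mem_coe]

theorem IsLevelPair.prod [Add G] [Add H] [Add D] {d : G → D} {e : H → D} {M I : Set G}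
    {N J : Set H} (h₁ : IsLevelPair d M I) (h₂ : IsLevelPair e N J) :
    IsLevelPair (fun p : G × H => d p.1 + e p.2) (M ×ˢ N) (I ×ˢ J) := by
  obtain ⟨C, hC, hCd, rfl⟩ := h₁
  obtain ⟨E, hE, hEe, rfl⟩ := h₂
  refine ⟨C ×ˢ E, hC.product hE, fun p hp q hq => ?_, ?_⟩
  · rw [Finset.mem_product] at hp hq
    exact congrArg₂ (· + ·) (hCd _ hp.1 _ hq.1) (hEe _ hp.2 _ hq.2)
  · rw [Finset.coe_product, Set.prod_add_prod_comm]

theorem IsLevelPair.image [Add G] [Add H] {F : Type*} [FunLike F G H] [AddHomClass F G H]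
    {d : G → D} {e : H → D} {M I : Set G} (h : IsLevelPair d M I) (φ : F)
    (hφ : ∀ g, e (φ g) = d g) : IsLevelPair e (φ '' M) (φ '' I) := by
  classical
  obtain ⟨C, hC, hCd, rfl⟩ := h
  refine ⟨C.image φ, hC.image φ, ?_, ?_⟩
  · simpa only [Finset.forall_mem_image, hφ] using hCd
  · rw [Finset.coe_image, Set.image_add]

end Level

section Glue

variable {p q : ℕ} {G H : Type*} [AddCommGroup G] [AddCommGroup H] (v : Fin q → ℤ)

/-- The unimodular shear `(x, z) ↦ (x, z + x_last • v)`, which identifies the product of the cones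
of `u` and `v` with the cone of the concatenation `(u, v)` when `u` ends in `1`. It is defined over
an arbitrary group of coefficients in order to serve both `ℤ` and `ℝ`. -/
def glue : (Fin (p + 1) → G) × (Fin q → G) ≃+ (Fin (p + 1 + q) → G) where
  toFun x := Fin.append x.1 (fun j => x.2 j + v j • x.1 (Fin.last p))
  invFun w := (fun i => w (Fin.castAdd q i),
    fun j => w (Fin.natAdd (p + 1) j) - v j • w (Fin.castAdd q (Fin.last p)))
  left_inv x := by simp
  right_inv w := by simp [Fin.append_castAdd_natAdd]
  map_add' x y := by
    ext k
    cases k using Fin.addCases with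
    | left i => simp
    | right j => simp [add_add_add_comm]

@[simp]
theorem glue_castAdd (x : (Fin (p + 1) → G) × (Fin q → G)) (i : Fin (p + 1)) :
    glue v x (Fin.castAdd q i) = x.1 i := by
  simp [glue]

@[simp]
theorem glue_natAdd (x : (Fin (p + 1) → G) × (Fin q → G)) (j : Fin q) :
    glue v x (Fin.natAdd (p + 1) j) = x.2 j + v j • x.1 (Fin.last p) := by
  simp [glue]

theorem comp_glue (f : G →+ H) (x : (Fin (p + 1) → G) × (Fin q → G)) :
    f ∘ glue v x = glue v (f ∘ x.1, f ∘ x.2) := by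
  ext k
  cases k using Fin.addCases with
  | left i => simp
  | right j => simp

theorem preimage_comp_glue_image_prod (f : G →+ H) (A : Set (Fin (p + 1) → H))
    (B : Set (Fin q → H)) :
    (f ∘ ·) ⁻¹' (glue v '' (A ×ˢ B)) =
      glue v '' (((f ∘ ·) ⁻¹' A) ×ˢ ((f ∘ ·) ⁻¹' B)) := by
  ext w
  obtain ⟨x, rfl⟩ := (glue v).surjective w
  rw [Set.mem_preimage, comp_glue, (glue v).injective.mem_set_image,
    (glue v).injective.mem_set_image]
  rfl

theorem isHomeomorph_glue [TopologicalSpace G] [IsTopologicalAddGroup G] :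
    IsHomeomorph (glue (p := p) (G := G) v) := by
  have continuous_glue : Continuous (glue (p := p) (G := G) v) := by
    refine continuous_pi fun k => ?_
    cases k using Fin.addCases with
    | left i => simp only [glue_castAdd]; fun_prop
    | right j => simp only [glue_natAdd]; fun_prop
  have continuous_symm : Continuous (glue (p := p) (G := G) v).symm := by
    change Continuous fun w : Fin (p + 1 + q) → G => (_, _)
    fun_prop
  exact (Homeomorph.mk (glue v).toEquiv continuous_glue continuous_symm).isHomeomorph

end Glue

section PartialSums

variable {p q : ℕ} {M : Type*} [AddCommMonoid M]

theorem sum_Iic_castAdd (f : Fin (p + q) → M) (j : Fin p) :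
    ∑ i ∈ Finset.Iic (Fin.castAdd q j), f i = ∑ i ∈ Finset.Iic j, f (Fin.castAdd q i) := by
  rw [← Fin.map_castAddEmb_Iic, Finset.sum_map]
  rfl

theorem sum_Iic_natAdd (f : Fin (p + q) → M) (j : Fin q) :
    ∑ i ∈ Finset.Iic (Fin.natAdd p j), f i =
      ∑ i, f (Fin.castAdd q i) + ∑ i ∈ Finset.Iic j, f (Fin.natAdd p i) := by
  have left_le (i : Fin p) : Fin.castAdd q i ≤ Fin.natAdd p j := by
    simp only [Fin.le_def, Fin.val_castAdd, Fin.val_natAdd]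
    omega
  simp only [← Finset.filter_ge_eq_Iic, Finset.sum_filter, Fin.sum_univ_add, left_le, if_true,
    Fin.natAdd_le_natAdd_iff]

end PartialSums

section IncrementCone

variable {k p q : ℕ} {G : Type*} [AddCommGroup G]

/-- The point whose ratios `x_j / u_j` have successive increments `b`, that is,
`x_j = u_j (b_0 + ⋯ + b_j)`. -/
def ofIncrements (u : Fin k → ℤ) (b : Fin k → G) : Fin k → G :=
  fun j => u j • ∑ i ∈ Finset.Iic j, b i

theorem ofIncrements_last {u : Fin (p + 1) → ℤ} (hu : u (Fin.last p) = 1) (b : Fin (p + 1) → G) :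
    ofIncrements u b (Fin.last p) = ∑ i, b i := by
  rw [ofIncrements, hu, one_zsmul, ← Fin.top_eq_last, Finset.Iic_top]

theorem ofIncrements_append {u : Fin (p + 1) → ℤ} (hu : u (Fin.last p) = 1) (v : Fin q → ℤ)
    (b : Fin (p + 1) → G) (c : Fin q → G) :
    ofIncrements (Fin.append u v) (Fin.append b c) =
      glue v (ofIncrements u b, ofIncrements v c) := by
  ext k
  cases k using Fin.addCases with
  | left i => simp [ofIncrements, sum_Iic_castAdd]
  | right j =>
    simp only [glue_natAdd, ofIncrements_last hu]
    simp [ofIncrements, sum_Iic_natAdd, add_comm]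

variable (G) in
/-- The cone of points whose ratios `x_j / u_j` start nonnegative and increase weakly. For positive
`u` and `G = ℝ` this is the `u`-lecture hall cone; encoding it by increments avoids division. -/
def incrementCone [Preorder G] (u : Fin k → ℤ) : Set (Fin k → G) :=
  ofIncrements u '' Set.Ici 0

theorem image_appendEquiv_Ici_zero {α : Type*} [Preorder α] [Zero α] :
    Fin.appendEquiv p q '' (Set.Ici (0 : Fin p → α) ×ˢ Set.Ici (0 : Fin q → α)) = Set.Ici 0 := by
  ext w
  obtain ⟨x, rfl⟩ := (Fin.appendEquiv p q).surjective w
  rw [(Fin.appendEquiv p q).injective.mem_set_image]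
  simp only [Set.mem_prod, Set.mem_Ici, Pi.le_def, Pi.zero_apply, Fin.forall_fin_add,
    Fin.appendEquiv, Equiv.coe_fn_mk, Fin.append_left, Fin.append_right]

theorem incrementCone_append [Preorder G] {u : Fin (p + 1) → ℤ} (hu : u (Fin.last p) = 1)
    (v : Fin q → ℤ) :
    incrementCone G (Fin.append u v) = glue v '' (incrementCone G u ×ˢ incrementCone G v) := by
  rw [incrementCone, incrementCone, incrementCone, ← image_appendEquiv_Ici_zero, Set.image_image,
    Set.prod_image_image_eq, Set.image_image]
  exact Set.image_congr fun x _ => ofIncrements_append hu v x.1 x.2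

end IncrementCone

section LectureHallCone

variable {n m : ℕ} (s : Fin n → ℤ) (t : Fin m → ℤ)

theorem vertex_combination_eq_ofIncrements (a : ℝ) (b : Fin n → ℝ) :
    a • (Fin.snoc (0 : Fin n → ℝ) 1 : Fin (n + 1) → ℝ) +
        ∑ i : Fin n, b i • (Fin.snoc (lhpVertexR n s i) 1 : Fin (n + 1) → ℝ) =
      ofIncrements (Fin.snoc s 1 : Fin (n + 1) → ℤ) (Fin.snoc b a : Fin (n + 1) → ℝ) := by
  ext j
  cases j using Fin.lastCases with
  | last =>
    rw [ofIncrements_last (Fin.snoc_last ..), Fin.sum_univ_castSucc]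
    simp [add_comm]
  | cast j =>
    simp [ofIncrements, lhpVertexR, ← Finset.filter_ge_eq_Iic, Finset.sum_filter, Finset.mul_sum,
      Fin.sum_univ_castSucc, mul_comm, (Fin.castSucc_lt_last j).not_ge]

theorem lhpCone_eq_incrementCone :
    lhpCone n s = incrementCone ℝ (Fin.snoc s 1 : Fin (n + 1) → ℤ) := by
  ext x
  constructor
  · rintro ⟨a, b, ha, hb, rfl⟩
    refine ⟨Fin.snoc b a, ?_, (vertex_combination_eq_ofIncrements s a b).symm⟩
    simpa [Pi.le_def, Fin.forall_fin_succ'] using ⟨hb, ha⟩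
  · rintro ⟨b, hb, rfl⟩
    refine ⟨b (Fin.last n), Fin.init b, hb _, fun i => hb _, ?_⟩
    rw [vertex_combination_eq_ofIncrements, Fin.snoc_init_self]

theorem lhpCone_append :
    lhpCone (n + 1 + m) (Fin.append (Fin.snoc s 1) t) =
      glue (Fin.snoc t 1 : Fin (m + 1) → ℤ) '' (lhpCone n s ×ˢ lhpCone m t) := by
  simp only [lhpCone_eq_incrementCone, ← Fin.append_snoc]
  exact incrementCone_append (Fin.snoc_last ..) _

theorem interior_lhpCone_append :
    interior (lhpCone (n + 1 + m) (Fin.append (Fin.snoc s 1) t)) =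
      glue (Fin.snoc t 1 : Fin (m + 1) → ℤ) ''
        (interior (lhpCone n s) ×ˢ interior (lhpCone m t)) := by
  rw [lhpCone_append, ← interior_prod_eq]
  exact ((isHomeomorph_glue _).image_interior _).symm

theorem lhpConeZ_append :
    lhpConeZ (n + 1 + m) (Fin.append (Fin.snoc s 1) t) =
      glue (Fin.snoc t 1 : Fin (m + 1) → ℤ) '' (lhpConeZ n s ×ˢ lhpConeZ m t) := by
  rw [lhpConeZ, lhpCone_append]
  exact preimage_comp_glue_image_prod _ (Int.castAddHom ℝ) (lhpCone n s) (lhpCone m t)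

theorem lhpConeInteriorZ_append :
    lhpConeInteriorZ (n + 1 + m) (Fin.append (Fin.snoc s 1) t) =
      glue (Fin.snoc t 1 : Fin (m + 1) → ℤ) ''
        (lhpConeInteriorZ n s ×ˢ lhpConeInteriorZ m t) := by
  rw [lhpConeInteriorZ, interior_lhpCone_append]
  exact preimage_comp_glue_image_prod _ (Int.castAddHom ℝ) (interior (lhpCone n s))
    (interior (lhpCone m t))

end LectureHallCone

theorem lhp_level_append_general (n m : ℕ) (s : Fin n → ℤ) (t : Fin m → ℤ)
    (h₁ : IsLevel n s) (h₂ : IsLevel m t) :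
    IsLevel (n + 1 + m) (Fin.append (Fin.snoc s 1) t) := by
  rw [isLevel_iff_isLevelPair] at h₁ h₂ ⊢
  rw [lhpConeZ_append, lhpConeInteriorZ_append]
  refine (h₁.prod h₂).image (glue (Fin.snoc t 1 : Fin (m + 1) → ℤ)) fun x => ?_
  calc glue (Fin.snoc t 1 : Fin (m + 1) → ℤ) x (Fin.natAdd (n + 1) (Fin.last m))
      = x.2 (Fin.last m) + x.1 (Fin.last n) := by rw [glue_natAdd, Fin.snoc_last, one_smul]
    _ = x.1 (Fin.last n) + x.2 (Fin.last m) := add_comm ..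

theorem lhp_level_append (n m : ℕ) (s : Fin n → ℤ) (t : Fin m → ℤ)
    (hs : ∀ i, 0 < s i) (ht : ∀ i, 0 < t i)
    (h₁ : IsLevel n s) (h₂ : IsLevel m t) :
    IsLevel (n + 1 + m) (Fin.append (Fin.snoc s 1) t) :=
  lhp_level_append_general n m s t h₁ h₂
end

section
/- Let s = (s_1,…,s_n) be a sequence of positive integers such that s_i = 1 for every index i with i ≡ 0 (mod 3). Then the s-lecture hall polytope P_n^(s) is level. -/
open scoped BigOperators

/-! With `s_0 = s_{n+1} = 1` and `X_0 = 0`, the lattice points of the cone over the lecture hall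
polytope are the integer sequences `X` whose ratios `X_i / s_i` are weakly increasing, the interior
ones those whose ratios are strictly increasing, and the height is `X_{n+1}`. At an index `m` with
`s_m = 1` the sequence `X - X_m s` restarts from zero, so such an index cuts the cone into two
independent lecture hall cones, and levelness of both pieces gives levelness of the whole.

If every third entry is `1`, all pieces have at most two interior indices: they are cones over a
point, a segment or a triangle. In such a cone every interior lattice point whose height is not
minimal stays interior after subtracting a suitable lattice point of height `1`. Descending to the
minimal height gives levelness. -/

namespace LectureHall

section Chains

variable {S X Y : ℕ → ℤ} {l m h : ℕ} {c : ℤ}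

/-- The ratio `X_i / S_i` attached to integer sequences `X` and `S`. -/
noncomputable def ratio (S X : ℕ → ℤ) (i : ℕ) : ℝ := X i / S i

/-- `X` is a lattice point of the cone `0 = X_l/S_l ≤ X_{l+1}/S_{l+1} ≤ ⋯ ≤ X_h/S_h`; its height is
the last entry `X_h`. -/
def IsWeakChain (S X : ℕ → ℤ) (l h : ℕ) : Prop :=
  X l = 0 ∧ MonotoneOn (ratio S X) (Set.Icc l h)

/-- `X` is an interior lattice point of the cone
`0 = X_l/S_l ≤ X_{l+1}/S_{l+1} ≤ ⋯ ≤ X_h/S_h`. -/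
def IsStrictChain (S X : ℕ → ℤ) (l h : ℕ) : Prop :=
  X l = 0 ∧ StrictMonoOn (ratio S X) (Set.Icc l h)

/-- Levelness of the lecture hall cone of `S` on the segment `[l, h]`: there is a height `K` such
that every interior lattice point is the sum of an interior lattice point of height `K` and a
lattice point of the cone. -/
def IsLevelOn (S : ℕ → ℤ) (l h : ℕ) : Prop :=
  ∃ K : ℤ, ∀ X, IsStrictChain S X l h →
    ∃ C, IsStrictChain S C l h ∧ C h = K ∧ IsWeakChain S (X - C) l h

lemma ratio_zero (S : ℕ → ℤ) : ratio S 0 = 0 := by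
  ext; simp [ratio]

lemma ratio_add (S X Y : ℕ → ℤ) : ratio S (X + Y) = ratio S X + ratio S Y := by
  ext; simp [ratio, add_div]

lemma ratio_sub_smul (hS : ∀ i, 0 < S i) (X : ℕ → ℤ) (c : ℤ) (i : ℕ) :
    ratio S (X - c • S) i = ratio S X i - c := by
  have : (S i : ℝ) ≠ 0 := by exact_mod_cast (hS i).ne'
  simp [ratio, sub_div, this]

lemma ratio_lt_ratio_iff (hS : ∀ i, 0 < S i) (i j : ℕ) :
    ratio S X i < ratio S X j ↔ X i * S j < X j * S i := by
  rw [ratio, ratio, div_lt_div_iff₀ (by exact_mod_cast hS i) (by exact_mod_cast hS j)]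
  norm_cast

lemma ratio_le_ratio_iff (hS : ∀ i, 0 < S i) (i j : ℕ) :
    ratio S X i ≤ ratio S X j ↔ X i * S j ≤ X j * S i := by
  rw [ratio, ratio, div_le_div_iff₀ (by exact_mod_cast hS i) (by exact_mod_cast hS j)]
  norm_cast

lemma eqOn_ratio {s : Set ℕ} (hXY : Set.EqOn X Y s) : Set.EqOn (ratio S X) (ratio S Y) s :=
  fun i hi ↦ by simp [ratio, hXY hi]

lemma isWeakChain_zero (S : ℕ → ℤ) (l h : ℕ) : IsWeakChain S 0 l h :=
  ⟨rfl, ratio_zero S ▸ monotoneOn_const⟩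

lemma IsWeakChain.add (hX : IsWeakChain S X l h) (hY : IsWeakChain S Y l h) :
    IsWeakChain S (X + Y) l h :=
  ⟨by simp [hX.1, hY.1], ratio_add S X Y ▸ hX.2.add hY.2⟩

lemma IsStrictChain.add_isWeakChain (hX : IsStrictChain S X l h) (hY : IsWeakChain S Y l h) :
    IsStrictChain S (X + Y) l h :=
  ⟨by simp [hX.1, hY.1], ratio_add S X Y ▸ hX.2.add_monotone hY.2⟩

lemma IsStrictChain.isWeakChain (hX : IsStrictChain S X l h) : IsWeakChain S X l h :=
  ⟨hX.1, hX.2.monotoneOn⟩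

lemma IsWeakChain.congr (hlh : l ≤ h) (hX : IsWeakChain S X l h)
    (hXY : Set.EqOn X Y (Set.Icc l h)) : IsWeakChain S Y l h :=
  ⟨hXY (Set.left_mem_Icc.2 hlh) ▸ hX.1, hX.2.congr (eqOn_ratio hXY)⟩

lemma IsStrictChain.congr (hlh : l ≤ h) (hX : IsStrictChain S X l h)
    (hXY : Set.EqOn X Y (Set.Icc l h)) : IsStrictChain S Y l h :=
  ⟨hXY (Set.left_mem_Icc.2 hlh) ▸ hX.1, hX.2.congr (eqOn_ratio hXY)⟩

lemma IsWeakChain.nonneg (hS : ∀ i, 0 < S i) (hX : IsWeakChain S X l h) {i : ℕ}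
    (hi : i ∈ Set.Icc l h) : 0 ≤ X i := by
  have hratio := hX.2 (Set.left_mem_Icc.2 (hi.1.trans hi.2)) hi hi.1
  rw [ratio_le_ratio_iff hS, hX.1, zero_mul] at hratio
  exact nonneg_of_mul_nonneg_left hratio (hS l)

lemma IsWeakChain.le_mul_of_eq_one (hS : ∀ i, 0 < S i) (hh : S h = 1) (hX : IsWeakChain S X l h)
    {i : ℕ} (hi : i ∈ Set.Icc l h) : X i ≤ X h * S i := by
  have hratio := hX.2 hi (Set.right_mem_Icc.2 (hi.1.trans hi.2)) hi.2
  rwa [ratio_le_ratio_iff hS, hh, mul_one] at hratio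

lemma exists_isStrictChain (hS : ∀ i, 0 < S i) (l h : ℕ) : ∃ X, IsStrictChain S X l h := by
  refine ⟨fun i ↦ (i - l) * S i, by simp, fun i _ j _ hij ↦ ?_⟩
  rw [ratio_lt_ratio_iff hS]
  have hSij := mul_pos (hS i) (hS j)
  have : (i : ℤ) < j := by exact_mod_cast hij
  nlinarith

lemma monotoneOn_ratio_sub_smul_iff (hS : ∀ i, 0 < S i) {s : Set ℕ} :
    MonotoneOn (ratio S (X - c • S)) s ↔ MonotoneOn (ratio S X) s := by
  simp only [MonotoneOn, ratio_sub_smul hS, sub_le_sub_iff_right]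

lemma strictMonoOn_ratio_sub_smul_iff (hS : ∀ i, 0 < S i) {s : Set ℕ} :
    StrictMonoOn (ratio S (X - c • S)) s ↔ StrictMonoOn (ratio S X) s := by
  simp only [StrictMonoOn, ratio_sub_smul hS, sub_lt_sub_iff_right]

lemma isWeakChain_iff_of_eq_one (hS : ∀ i, 0 < S i) (hlm : l ≤ m) (hmh : m ≤ h) (hm : S m = 1) :
    IsWeakChain S X l h ↔ IsWeakChain S X l m ∧ IsWeakChain S (X - X m • S) m h := by
  simp only [IsWeakChain, monotoneOn_ratio_sub_smul_iff hS, ← Set.Icc_union_Icc_eq_Icc hlm hmh]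
  constructor
  · rintro ⟨hl, hmono⟩
    exact ⟨⟨hl, hmono.mono Set.subset_union_left⟩, by simp [hm],
      hmono.mono Set.subset_union_right⟩
  · rintro ⟨⟨hl, hleft⟩, -, hright⟩
    exact ⟨hl, hleft.union_right hright (isGreatest_Icc hlm) (isLeast_Icc hmh)⟩

lemma isStrictChain_iff_of_eq_one (hS : ∀ i, 0 < S i) (hlm : l ≤ m) (hmh : m ≤ h)
    (hm : S m = 1) :
    IsStrictChain S X l h ↔ IsStrictChain S X l m ∧ IsStrictChain S (X - X m • S) m h := by
  simp only [IsStrictChain, strictMonoOn_ratio_sub_smul_iff hS,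
    ← Set.Icc_union_Icc_eq_Icc hlm hmh]
  constructor
  · rintro ⟨hl, hmono⟩
    exact ⟨⟨hl, hmono.mono Set.subset_union_left⟩, by simp [hm],
      hmono.mono Set.subset_union_right⟩
  · rintro ⟨⟨hl, hleft⟩, -, hright⟩
    exact ⟨hl, hleft.union hright (isGreatest_Icc hlm) (isLeast_Icc hmh)⟩

lemma exists_concat (hm : S m = 1) (X : ℕ → ℤ) (hY : Y m = 0) :
    ∃ Z : ℕ → ℤ, Set.EqOn Z X (Set.Iic m) ∧ Set.EqOn (Z - X m • S) Y (Set.Ici m) := by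
  refine ⟨fun i ↦ if i ≤ m then X i else X m * S i + Y i, fun i hi ↦ if_pos hi, fun i hi ↦ ?_⟩
  obtain rfl | hmi := (Set.mem_Ici.1 hi).eq_or_lt
  · simp [hm, hY]
  · simp [hmi.not_ge]

theorem IsLevelOn.concat (hS : ∀ i, 0 < S i) (hlm : l ≤ m) (hmh : m ≤ h) (hm : S m = 1)
    (h₁ : IsLevelOn S l m) (h₂ : IsLevelOn S m h) : IsLevelOn S l h := by
  obtain ⟨K₁, hK₁⟩ := h₁
  obtain ⟨K₂, hK₂⟩ := h₂
  refine ⟨K₁ * S h + K₂, fun X hX ↦ ?_⟩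
  obtain ⟨hX₁, hX₂⟩ := (isStrictChain_iff_of_eq_one hS hlm hmh hm).1 hX
  obtain ⟨C₁, hC₁, rfl, hXC₁⟩ := hK₁ X hX₁
  obtain ⟨C₂, hC₂, rfl, hXC₂⟩ := hK₂ _ hX₂
  obtain ⟨C, hCC₁, hCC₂⟩ := exists_concat hm C₁ hC₂.1
  have hCm : C m = C₁ m := hCC₁ Set.self_mem_Iic
  refine ⟨C, (isStrictChain_iff_of_eq_one hS hlm hmh hm).2 ⟨?_, ?_⟩, ?_,
    (isWeakChain_iff_of_eq_one hS hlm hmh hm).2 ⟨?_, ?_⟩⟩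
  · exact hC₁.congr hlm fun i hi ↦ (hCC₁ hi.2).symm
  · exact hC₂.congr hmh fun i hi ↦ hCm ▸ (hCC₂ hi.1).symm
  · have hCh : C h - C₁ m * S h = C₂ h := hCC₂ hmh
    linarith
  · exact hXC₁.congr hlm fun i hi ↦ by simp [hCC₁ hi.2]
  · refine hXC₂.congr hmh fun i hi ↦ ?_
    simp only [Pi.sub_apply, Pi.smul_apply, smul_eq_mul, ← hCC₂ hi.1, hCm]
    ring

theorem IsLevelOn.of_descent (hS : ∀ i, 0 < S i) (hlh : l ≤ h)
    (hdescent : ∀ X Y, IsStrictChain S X l h → IsStrictChain S Y l h → Y h < X h →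
      ∃ D, IsWeakChain S D l h ∧ D h = 1 ∧ IsStrictChain S (X - D) l h) :
    IsLevelOn S l h := by
  obtain ⟨K, ⟨Y, hY, hYK⟩, hmin⟩ :
      ∃ K : ℤ, (∃ Y, IsStrictChain S Y l h ∧ Y h = K) ∧
        ∀ z, (∃ X, IsStrictChain S X l h ∧ X h = z) → K ≤ z := by
    apply Int.exists_least_of_bdd
    · refine ⟨0, ?_⟩
      rintro _ ⟨X, hX, rfl⟩
      exact hX.isWeakChain.nonneg hS (Set.right_mem_Icc.2 hlh)
    · obtain ⟨X, hX⟩ := exists_isStrictChain hS l h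
      exact ⟨X h, X, hX, rfl⟩
  refine ⟨K, fun X hX ↦ ?_⟩
  obtain ⟨k, hk⟩ := Int.le.dest (hmin _ ⟨X, hX, rfl⟩)
  induction k generalizing X with
  | zero => exact ⟨X, hX, by simpa using hk.symm, by simpa using isWeakChain_zero S l h⟩
  | succ k ih =>
    push_cast at hk
    obtain ⟨D, hD, hDh, hXD⟩ := hdescent X Y hX hY (by omega)
    obtain ⟨C, hC, hCK, hXDC⟩ := ih (X - D) hXD (by rw [Pi.sub_apply, hDh]; omega)
    exact ⟨C, hC, hCK, by simpa [sub_right_comm X D C] using hXDC.add hD⟩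

lemma isWeakChain_self : IsWeakChain S X l l ↔ X l = 0 := by
  simp [IsWeakChain]

lemma isStrictChain_self : IsStrictChain S X l l ↔ X l = 0 := by
  simp [IsStrictChain]

lemma isLevelOn_self (S : ℕ → ℤ) (l : ℕ) : IsLevelOn S l l :=
  ⟨0, fun X hX ↦ ⟨X, hX, hX.1, by simpa using isWeakChain_zero S l l⟩⟩

lemma isWeakChain_iff_forall :
    IsWeakChain S X l h ↔ X l = 0 ∧ ∀ i, l ≤ i → i < h → ratio S X i ≤ ratio S X (i + 1) := by
  refine and_congr_right fun _ ↦ ⟨fun hX i hl hh ↦ ?_, fun hX ↦ ?_⟩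
  · exact hX ⟨hl, hh.le⟩ ⟨hl.trans i.le_succ, hh⟩ i.le_succ
  · exact monotoneOn_of_le_add_one Set.ordConnected_Icc fun i _ hi hi' ↦ hX i hi.1 hi'.2

lemma isStrictChain_iff_forall :
    IsStrictChain S X l h ↔ X l = 0 ∧ ∀ i, l ≤ i → i < h → ratio S X i < ratio S X (i + 1) := by
  refine and_congr_right fun _ ↦ ⟨fun hX i hl hh ↦ ?_, fun hX ↦ ?_⟩
  · exact hX ⟨hl, hh.le⟩ ⟨hl.trans i.le_succ, hh⟩ i.lt_succ_self
  · exact strictMonoOn_of_lt_add_one Set.ordConnected_Icc fun i _ hi hi' ↦ hX i hi.1 hi'.2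

lemma isWeakChain_add_one_iff (hS : ∀ i, 0 < S i) (hlh : l ≤ h) :
    IsWeakChain S X l (h + 1) ↔ IsWeakChain S X l h ∧ X h * S (h + 1) ≤ X (h + 1) * S h := by
  simp only [isWeakChain_iff_forall, ratio_le_ratio_iff hS, and_assoc]
  grind

lemma isStrictChain_add_one_iff (hS : ∀ i, 0 < S i) (hlh : l ≤ h) :
    IsStrictChain S X l (h + 1) ↔ IsStrictChain S X l h ∧ X h * S (h + 1) < X (h + 1) * S h := by
  simp only [isStrictChain_iff_forall, ratio_lt_ratio_iff hS, and_assoc]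
  grind

end Chains

section Descent

lemma exists_mul_lt_and_le_add_one_mul {b : ℤ} (hb : 0 < b) (N : ℤ) :
    ∃ k : ℤ, k * b < N ∧ N ≤ (k + 1) * b := by
  have hlow := Int.ediv_mul_le (N - 1) hb.ne'
  have hupp := Int.lt_ediv_add_one_mul_self (N - 1) hb
  exact ⟨(N - 1) / b, by omega, by omega⟩

lemma exists_segment_descent {a p d : ℤ} (ha : 0 < a) (hp : 0 < p) (hpd : p < d * a)
    (hlow : 1 < (d - 1) * a) : ∃ u, 0 ≤ u ∧ u ≤ a ∧ u < p ∧ p - u < (d - 1) * a := by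
  obtain hpd' | hpd' := lt_or_ge p ((d - 1) * a)
  · exact ⟨0, le_rfl, ha.le, hp, by omega⟩
  · exact ⟨p - ((d - 1) * a - 1), by omega, by linarith, by omega, by omega⟩

/-- `(u, v)` is a lattice point of the triangle `0 ≤ x/a ≤ y/b ≤ 1`, and `(p, q, d) - (u, v, 1)` is
an interior point of the cone over this triangle. -/
structure IsTriangleDescent (a b p q d u v : ℤ) : Prop where
  nonneg : 0 ≤ u
  le : u * b ≤ v * a
  le_top : v ≤ b
  sub_pos : u < p
  sub_lt : (p - u) * b < (q - v) * a
  sub_lt_top : q - v < (d - 1) * b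

variable {a b p q d : ℤ}

/- The difference is the rightmost interior lattice point `(p', q')` with `p' ≤ p` on the horizontal
line directly below the top edge of the `(d - 1)`-fold triangle. -/
lemma exists_isTriangleDescent_of_add_le (ha : 0 < a) (hb : 0 < b) (hp : 0 < p) (hqd : q < d * b)
    (hlow : b < ((d - 1) * b - 1) * a) (hqd' : (d - 1) * b ≤ q) (hpq : p * b + b ≤ q * a) :
    ∃ u v, IsTriangleDescent a b p q d u v := by
  obtain ⟨k, hk, hk'⟩ := exists_mul_lt_and_le_add_one_mul hb (((d - 1) * b - 1) * a)
  obtain hpk | hkp := le_or_gt p k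
  · have hpk' : p * b ≤ k * b := by gcongr
    exact ⟨0, q - ((d - 1) * b - 1), le_rfl, by nlinarith, by linarith, hp, by linarith,
      by linarith⟩
  · have hk_pos : 0 < k := by
      have : 1 * b < (k + 1) * b := by linarith
      linarith [lt_of_mul_lt_mul_right this hb.le]
    exact ⟨p - k, q - ((d - 1) * b - 1), by omega, by linarith, by linarith, by linarith,
      by linarith, by linarith⟩

/- The inequalities force `(p, d) = (a, 2)`, and one subtracts `(1, ⌈b/a⌉, 1)`. -/
lemma exists_isTriangleDescent_of_lt_add (ha : 0 < a) (hb : 0 < b) (hpq : p * b < q * a)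
    (hlow : b < ((d - 1) * b - 1) * a) (hpa : p ≤ a) (hqd : (d - 1) * b ≤ q)
    (hqp : q * a < p * b + b) : ∃ u v, IsTriangleDescent a b p q d u v := by
  have hd : (d - 1) * a < p + 1 := by
    refine lt_of_mul_lt_mul_right (?_ : (d - 1) * a * b < (p + 1) * b) hb.le
    nlinarith
  obtain rfl : d = 2 := by
    have hQ_pos : 0 < (d - 1) * b - 1 := pos_of_mul_pos_left (hb.trans hlow) ha.le
    have hd_pos : 0 < d - 1 := pos_of_mul_pos_left (by linarith : 0 < (d - 1) * b) hb.le
    have hd_le : d - 1 < 2 := by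
      by_contra! hd_ge
      nlinarith
    omega
  obtain rfl : p = a := by omega
  have hp : 1 < p := by
    by_contra! hp_le
    nlinarith
  have hbq : b < q := lt_of_mul_lt_mul_right (by linarith) ha.le
  obtain ⟨k, hk, hk'⟩ := exists_mul_lt_and_le_add_one_mul ha b
  refine ⟨1, k + 1, zero_le_one, by linarith, ?_, hp, by nlinarith, ?_⟩
  · exact lt_of_mul_lt_mul_right (by nlinarith : k * p < b * p) ha.le
  · exact lt_of_mul_lt_mul_right (by linarith : (q - (k + 1)) * p < (2 - 1) * b * p) ha.le

lemma exists_isTriangleDescent (ha : 0 < a) (hb : 0 < b) (hp : 0 < p) (hpq : p * b < q * a)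
    (hqd : q < d * b) (hlow : b < ((d - 1) * b - 1) * a) :
    ∃ u v, IsTriangleDescent a b p q d u v := by
  obtain hap | hpa := lt_or_ge a p
  · exact ⟨a, b, ha.le, (mul_comm a b).le, le_rfl, hap, by linarith, by linarith⟩
  obtain hqd' | hqd' := lt_or_ge q ((d - 1) * b)
  · exact ⟨0, 0, le_rfl, by simp, hb.le, hp, by simpa, by simpa⟩
  obtain hpq' | hqp := le_or_gt (p * b + b) (q * a)
  · exact exists_isTriangleDescent_of_add_le ha hb hp hqd hlow hqd' hpq'
  · exact exists_isTriangleDescent_of_lt_add ha hb hpq hlow hpa hqd' hqp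

lemma lt_mul_of_interior_triangle {p₀ q₀ d₀ : ℤ} (ha : 0 < a) (hb : 0 < b) (hp₀ : 0 < p₀)
    (hpq₀ : p₀ * b < q₀ * a) (hqd₀ : q₀ < d₀ * b) (hd₀ : d₀ < d) :
    b < ((d - 1) * b - 1) * a := by
  have hd : d₀ * b ≤ (d - 1) * b := by gcongr; omega
  calc b ≤ p₀ * b := le_mul_of_one_le_left hb.le hp₀
    _ < q₀ * a := hpq₀
    _ ≤ ((d - 1) * b - 1) * a := by gcongr; omega

end Descent

section ShortSegments

variable {S X : ℕ → ℤ} {l h : ℕ}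

lemma isLevelOn_add_one (hS : ∀ i, 0 < S i) (hl : S l = 1) (hh : S (l + 1) = 1) :
    IsLevelOn S l (l + 1) := by
  have hweak (X) := isWeakChain_add_one_iff (X := X) hS (le_refl l)
  have hstrict (X) := isStrictChain_add_one_iff (X := X) hS (le_refl l)
  simp only [isWeakChain_self, isStrictChain_self, hl, hh, mul_one] at hweak hstrict
  refine .of_descent hS l.le_succ fun X Y hX hY hYX ↦ ⟨fun i ↦ i - l, ?_, by simp, ?_⟩
  · simp [hweak]
  · rw [hstrict] at hX hY ⊢
    simp only [Pi.sub_apply]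
    omega

lemma isWeakChain_add_two_iff (hS : ∀ i, 0 < S i) (hl : S l = 1) (hh : S (l + 2) = 1) :
    IsWeakChain S X l (l + 2) ↔ X l = 0 ∧ 0 ≤ X (l + 1) ∧ X (l + 1) ≤ X (l + 2) * S (l + 1) := by
  rw [isWeakChain_add_one_iff hS (by omega), isWeakChain_add_one_iff hS le_rfl, isWeakChain_self,
    hl, hh, mul_one, and_assoc]
  exact and_congr_right fun hX ↦ by rw [hX, zero_mul]

lemma isStrictChain_add_two_iff (hS : ∀ i, 0 < S i) (hl : S l = 1) (hh : S (l + 2) = 1) :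
    IsStrictChain S X l (l + 2) ↔ X l = 0 ∧ 0 < X (l + 1) ∧ X (l + 1) < X (l + 2) * S (l + 1) := by
  rw [isStrictChain_add_one_iff hS (by omega), isStrictChain_add_one_iff hS le_rfl,
    isStrictChain_self, hl, hh, mul_one, and_assoc]
  exact and_congr_right fun hX ↦ by rw [hX, zero_mul]

lemma isWeakChain_add_three_iff (hS : ∀ i, 0 < S i) (hl : S l = 1) (hh : S (l + 3) = 1) :
    IsWeakChain S X l (l + 3) ↔ X l = 0 ∧ 0 ≤ X (l + 1) ∧
      X (l + 1) * S (l + 2) ≤ X (l + 2) * S (l + 1) ∧ X (l + 2) ≤ X (l + 3) * S (l + 2) := by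
  rw [isWeakChain_add_one_iff hS (by omega), isWeakChain_add_one_iff hS (by omega),
    isWeakChain_add_one_iff hS le_rfl, isWeakChain_self, hl, hh, mul_one, mul_one, and_assoc,
    and_assoc]
  exact and_congr_right fun hX ↦ by rw [hX, zero_mul]

lemma isStrictChain_add_three_iff (hS : ∀ i, 0 < S i) (hl : S l = 1) (hh : S (l + 3) = 1) :
    IsStrictChain S X l (l + 3) ↔ X l = 0 ∧ 0 < X (l + 1) ∧
      X (l + 1) * S (l + 2) < X (l + 2) * S (l + 1) ∧ X (l + 2) < X (l + 3) * S (l + 2) := by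
  rw [isStrictChain_add_one_iff hS (by omega), isStrictChain_add_one_iff hS (by omega),
    isStrictChain_add_one_iff hS le_rfl, isStrictChain_self, hl, hh, mul_one, mul_one, and_assoc,
    and_assoc]
  exact and_congr_right fun hX ↦ by rw [hX, zero_mul]

lemma isLevelOn_add_two (hS : ∀ i, 0 < S i) (hl : S l = 1) (hh : S (l + 2) = 1) :
    IsLevelOn S l (l + 2) := by
  refine .of_descent hS (by omega) fun X Y hX hY hYX ↦ ?_
  simp only [isWeakChain_add_two_iff hS hl hh, isStrictChain_add_two_iff hS hl hh] at *
  obtain ⟨hX₀, hX₁, hX₂⟩ := hX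
  obtain ⟨-, hY₁, hY₂⟩ := hY
  obtain ⟨u, hu₀, hu, huX, hXu⟩ := exists_segment_descent (hS (l + 1)) hX₁ hX₂
    (by nlinarith [hS (l + 1)])
  refine ⟨fun i ↦ [0, u, 1].getD (i - l) 0, ?_⟩
  simp [*]

lemma isLevelOn_add_three (hS : ∀ i, 0 < S i) (hl : S l = 1) (hh : S (l + 3) = 1) :
    IsLevelOn S l (l + 3) := by
  refine .of_descent hS (by omega) fun X Y hX hY hYX ↦ ?_
  simp only [isWeakChain_add_three_iff hS hl hh, isStrictChain_add_three_iff hS hl hh] at *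
  obtain ⟨hX₀, hX₁, hX₂, hX₃⟩ := hX
  obtain ⟨-, hY₁, hY₂, hY₃⟩ := hY
  obtain ⟨u, v, huv⟩ := exists_isTriangleDescent (hS (l + 1)) (hS (l + 2)) hX₁ hX₂ hX₃
    (lt_mul_of_interior_triangle (hS (l + 1)) (hS (l + 2)) hY₁ hY₂ hY₃ hYX)
  refine ⟨fun i ↦ [0, u, v, 1].getD (i - l) 0, ?_⟩
  simp [hX₀, huv.nonneg, huv.le, huv.le_top, huv.sub_pos, huv.sub_lt, huv.sub_lt_top]

lemma isLevelOn_of_le_add_three (hS : ∀ i, 0 < S i) (hlh : l < h) (hhl : h ≤ l + 3)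
    (hl : S l = 1) (hh : S h = 1) : IsLevelOn S l h := by
  obtain rfl | rfl | rfl : h = l + 1 ∨ h = l + 2 ∨ h = l + 3 := by omega
  · exact isLevelOn_add_one hS hl hh
  · exact isLevelOn_add_two hS hl hh
  · exact isLevelOn_add_three hS hl hh

theorem isLevelOn_of_forall_exists_eq_one (hS : ∀ i, 0 < S i)
    (hones : ∀ i, ∃ j, i < j ∧ j ≤ i + 3 ∧ S j = 1) (hlh : l ≤ h) (hl : S l = 1) (hh : S h = 1) :
    IsLevelOn S l h := by
  induction hk : h - l using Nat.strong_induction_on generalizing l with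
  | _ k ih =>
    obtain rfl | hlh := hlh.eq_or_lt
    · exact isLevelOn_self S l
    obtain ⟨m, hlm, hml, hmh, hm⟩ : ∃ m, l < m ∧ m ≤ l + 3 ∧ m ≤ h ∧ S m = 1 := by
      obtain ⟨j, hlj, hjl, hj⟩ := hones l
      obtain hjh | hhj := le_or_gt j h
      · exact ⟨j, hlj, hjl, hjh, hj⟩
      · exact ⟨h, hlh, by omega, le_rfl, hh⟩
    exact (isLevelOn_of_le_add_three hS hlm hml hl hm).concat hS hlm.le hmh hm
      (ih (h - m) (by omega) hmh hm rfl)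

end ShortSegments

section Cone

variable {n : ℕ} {s : Fin n → ℤ}

/-- The extension of the finite sequence `x_1, …, x_m` by a constant `c` at `0` and beyond `m`.
The paper's conventions `s_0 = s_{n+1} = 1` and `x_0 = 0` are `pad 1 s` and `pad 0 x`. -/
def pad {R : Type*} {m : ℕ} (c : R) (x : Fin m → R) : ℕ → R
  | 0 => c
  | k + 1 => if hk : k < m then x ⟨k, hk⟩ else c

lemma pad_add_one {R : Type*} {m : ℕ} (c : R) (x : Fin m → R) (j : Fin m) :
    pad c x (j + 1) = x j :=
  dif_pos j.2

lemma pad_eq_of_lt {R : Type*} {m k : ℕ} (c : R) (x : Fin m → R) (hk : m < k) :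
    pad c x k = c := by
  obtain _ | k := k
  · rfl
  · exact dif_neg (by omega)

lemma pad_eq_or_exists {R : Type*} {m : ℕ} (c : R) (x : Fin m → R) (k : ℕ) :
    pad c x k = c ∨ ∃ j, pad c x k = x j := by
  obtain _ | k := k
  · exact .inl rfl
  · obtain hk | hk := lt_or_ge k m
    · exact .inr ⟨⟨k, hk⟩, dif_pos hk⟩
    · exact .inl (dif_neg hk.not_gt)

lemma pad_one_pos (hs : ∀ i, 0 < s i) (k : ℕ) : 0 < pad 1 s k := by
  obtain hk | ⟨j, hj⟩ := pad_eq_or_exists 1 s k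
  · exact one_pos.trans_eq hk.symm
  · exact (hs j).trans_eq hj.symm

lemma pad_map {R R' : Type*} {m : ℕ} (f : R → R') (c : R) (x : Fin m → R) :
    pad (f c) (fun j ↦ f (x j)) = fun k ↦ f (pad c x k) := by
  ext (_ | k)
  · rfl
  · exact (apply_dite f _ _ _).symm

lemma pad_zero_add {R : Type*} [AddZeroClass R] {m : ℕ} (x y : Fin m → R) :
    pad 0 (x + y) = pad 0 x + pad 0 y := by
  ext (_ | k)
  · exact (add_zero 0).symm
  · by_cases hk : k < m <;> simp [pad, hk]

lemma pad_zero_sub {R : Type*} [SubNegZeroMonoid R] {m : ℕ} (x y : Fin m → R) :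
    pad 0 (x - y) = pad 0 x - pad 0 y := by
  ext (_ | k)
  · exact (sub_zero 0).symm
  · by_cases hk : k < m <;> simp [pad, hk]

lemma pad_zero_smul {R : Type*} [MulZeroClass R] {m : ℕ} (r : R) (x : Fin m → R) :
    pad 0 (r • x) = r • pad 0 x := by
  have h := pad_map (r * ·) 0 x
  rwa [mul_zero] at h

lemma exists_eqOn_pad {R : Type*} [Zero R] {X : ℕ → R} (hX : X 0 = 0) (m : ℕ) :
    ∃ x : Fin m → R, Set.EqOn X (pad 0 x) (Set.Icc 0 m) := by
  refine ⟨fun j ↦ X (j + 1), fun k hk ↦ ?_⟩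
  obtain _ | k := k
  · exact hX
  · exact (pad_add_one 0 (fun j : Fin m ↦ X (j + 1)) ⟨k, hk.2⟩).symm

/-- The gaps `x_{i+1}/s_{i+1} - x_i/s_i` between consecutive ratios of a real point `x`. -/
noncomputable def gapMap (s : Fin n → ℤ) : (Fin (n + 1) → ℝ) →ₗ[ℝ] (Fin (n + 1) → ℝ) where
  toFun x i := pad 0 x (i + 1) / (pad 1 s (i + 1) : ℤ) - pad 0 x i / (pad 1 s i : ℤ)
  map_add' x y := by
    ext i
    simp only [pad_zero_add, Pi.add_apply]
    ring
  map_smul' r x := by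
    ext i
    simp only [pad_zero_smul, Pi.smul_apply, smul_eq_mul, RingHom.id_apply]
    ring

/-- The point whose ratios `x_{j+1}/s_{j+1}` are the partial sums of `β`. -/
noncomputable def partialSumMap (s : Fin n → ℤ) (β : Fin (n + 1) → ℝ) (j : Fin (n + 1)) : ℝ :=
  (pad 1 s (j + 1) : ℤ) * ∑ i ∈ Finset.Iic j, β i

lemma partialSumMap_gapMap (hs : ∀ i, 0 < s i) (x : Fin (n + 1) → ℝ) :
    partialSumMap s (gapMap s x) = x := by
  ext j
  have hsum : ∑ i ∈ Finset.Iic j, gapMap s x i = pad 0 x (j + 1) / (pad 1 s (j + 1) : ℤ) := by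
    have := Fin.sum_Iic_sub j fun k : Fin (n + 2) ↦ pad 0 x k / (pad 1 s k : ℤ)
    simpa [pad, gapMap] using this
  have hpos : ((pad 1 s (j + 1) : ℤ) : ℝ) ≠ 0 := by exact_mod_cast (pad_one_pos hs _).ne'
  rw [partialSumMap, hsum, mul_div_cancel₀ _ hpos, pad_add_one]

lemma gapMap_injective (hs : ∀ i, 0 < s i) : Function.Injective (gapMap s) :=
  Function.LeftInverse.injective (partialSumMap_gapMap hs)

/-- `gapMap` as a continuous linear automorphism: it carries the lecture hall cone to the
nonnegative orthant. -/
noncomputable def gapEquiv (hs : ∀ i, 0 < s i) : (Fin (n + 1) → ℝ) ≃L[ℝ] (Fin (n + 1) → ℝ) :=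
  (LinearEquiv.ofInjectiveEndo (gapMap s) (gapMap_injective hs)).toContinuousLinearEquiv

lemma gapEquiv_apply (hs : ∀ i, 0 < s i) (x : Fin (n + 1) → ℝ) : gapEquiv hs x = gapMap s x := rfl

lemma gapMap_partialSumMap (hs : ∀ i, 0 < s i) (β : Fin (n + 1) → ℝ) :
    gapMap s (partialSumMap s β) = β := by
  obtain ⟨x, rfl⟩ := (gapEquiv hs).surjective β
  rw [gapEquiv_apply, partialSumMap_gapMap hs]

lemma smul_snoc_add_sum_smul_snoc (s : Fin n → ℤ) (a : ℝ) (b : Fin n → ℝ) :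
    a • (Fin.snoc (0 : Fin n → ℝ) 1 : Fin (n + 1) → ℝ) +
      ∑ i, b i • (Fin.snoc (lhpVertexR n s i) 1 : Fin (n + 1) → ℝ) =
    partialSumMap s (Fin.snoc b a) := by
  ext j
  induction j using Fin.lastCases with
  | last =>
    have : pad 1 s (n + 1) = 1 := pad_eq_of_lt 1 s n.lt_succ_self
    have hIic : Finset.Iic (Fin.last n) = Finset.univ := Finset.Iic_top
    simp [partialSumMap, hIic, Fin.sum_univ_castSucc, this, add_comm]
  | cast j =>
    have hsum : ∑ i ∈ Finset.Iic j.castSucc, (Fin.snoc b a : Fin (n + 1) → ℝ) i =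
        ∑ i, if i ≤ j then b i else 0 := by
      rw [← Finset.filter_ge_eq_Iic, Finset.sum_filter, Fin.sum_univ_castSucc]
      simp [(Fin.castSucc_lt_last j).not_ge]
    simp [partialSumMap, hsum, pad_add_one, lhpVertexR, Finset.mul_sum, mul_comm]

lemma mem_lhpCone_iff (hs : ∀ i, 0 < s i) {x : Fin (n + 1) → ℝ} :
    x ∈ lhpCone n s ↔ 0 ≤ gapMap s x := by
  simp only [lhpCone, smul_snoc_add_sum_smul_snoc, Set.mem_ofPred_eq]
  constructor
  · rintro ⟨a, b, ha, hb, rfl⟩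
    rw [gapMap_partialSumMap hs]
    exact Fin.lastCases (by simpa) (by simpa)
  · intro hx
    refine ⟨gapMap s x (Fin.last n), Fin.init (gapMap s x), hx _, fun i ↦ hx _, ?_⟩
    rw [Fin.snoc_init_self, partialSumMap_gapMap hs]

lemma mem_interior_lhpCone_iff (hs : ∀ i, 0 < s i) {x : Fin (n + 1) → ℝ} :
    x ∈ interior (lhpCone n s) ↔ ∀ i, 0 < gapMap s x i := by
  have hcone : lhpCone n s = (gapEquiv hs).toHomeomorph ⁻¹' Set.Ici 0 :=
    Set.ext fun x ↦ mem_lhpCone_iff hs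
  rw [hcone, ← Homeomorph.preimage_interior, ← Set.pi_univ_Ici,
    interior_pi_set Set.finite_univ]
  simp [gapEquiv_apply]

lemma gapMap_intCast (s : Fin n → ℤ) (x : Fin (n + 1) → ℤ) (i : Fin (n + 1)) :
    gapMap s (fun j ↦ (x j : ℝ)) i =
      ratio (pad 1 s) (pad 0 x) (i + 1) - ratio (pad 1 s) (pad 0 x) i := by
  have hcast : pad 0 (fun j ↦ (x j : ℝ)) = fun k ↦ ((pad 0 x k : ℤ) : ℝ) := by
    simpa using pad_map (Int.cast : ℤ → ℝ) 0 x
  simp [gapMap, ratio, hcast]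

lemma mem_lhpConeZ_iff (hs : ∀ i, 0 < s i) {x : Fin (n + 1) → ℤ} :
    x ∈ lhpConeZ n s ↔ IsWeakChain (pad 1 s) (pad 0 x) 0 (n + 1) := by
  rw [lhpConeZ, Set.mem_ofPred_eq, mem_lhpCone_iff hs, isWeakChain_iff_forall]
  simp [Pi.le_def, gapMap_intCast, Fin.forall_iff, pad]

lemma mem_lhpConeInteriorZ_iff (hs : ∀ i, 0 < s i) {x : Fin (n + 1) → ℤ} :
    x ∈ lhpConeInteriorZ n s ↔ IsStrictChain (pad 1 s) (pad 0 x) 0 (n + 1) := by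
  rw [lhpConeInteriorZ, Set.mem_ofPred_eq, mem_interior_lhpCone_iff hs, isStrictChain_iff_forall]
  simp [gapMap_intCast, Fin.forall_iff, pad]

lemma add_mem_lhpConeInteriorZ (hs : ∀ i, 0 < s i) {c x : Fin (n + 1) → ℤ}
    (hc : c ∈ lhpConeInteriorZ n s) (hx : x ∈ lhpConeZ n s) : c + x ∈ lhpConeInteriorZ n s := by
  rw [mem_lhpConeInteriorZ_iff hs] at hc ⊢
  rw [mem_lhpConeZ_iff hs] at hx
  simpa only [pad_zero_add] using hc.add_isWeakChain hx

lemma exists_mem_lhpConeInteriorZ_eqOn (hs : ∀ i, 0 < s i) {C : ℕ → ℤ}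
    (hC : IsStrictChain (pad 1 s) C 0 (n + 1)) :
    ∃ c ∈ lhpConeInteriorZ n s, Set.EqOn C (pad 0 c) (Set.Icc 0 (n + 1)) := by
  obtain ⟨c, hc⟩ := exists_eqOn_pad hC.1 (n + 1)
  exact ⟨c, (mem_lhpConeInteriorZ_iff hs).2 (hC.congr (Nat.zero_le _) hc), hc⟩

lemma finite_lhpConeInteriorZ_last_eq (hs : ∀ i, 0 < s i) (K : ℤ) :
    {c ∈ lhpConeInteriorZ n s | c (Fin.last n) = K}.Finite := by
  refine (Set.Finite.pi' fun j : Fin (n + 1) ↦ Set.finite_Icc 0 (K * pad 1 s (j + 1))).subset ?_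
  rintro c ⟨hc, rfl⟩ j
  have hj : (j + 1 : ℕ) ∈ Set.Icc 0 (n + 1) := ⟨by omega, by omega⟩
  have hchain := ((mem_lhpConeInteriorZ_iff hs).1 hc).isWeakChain
  have hlow := hchain.nonneg (pad_one_pos hs) hj
  have hupp := hchain.le_mul_of_eq_one (pad_one_pos hs) (pad_eq_of_lt 1 s n.lt_succ_self) hj
  rw [pad_add_one] at hlow hupp
  exact ⟨hlow, hupp.trans_eq (congrArg (· * _) (pad_add_one 0 c (Fin.last n)))⟩

lemma exists_pad_one_eq_one
    (hones : ∀ i j k : Fin n, (j : ℕ) = i + 1 → (k : ℕ) = i + 2 → s i = 1 ∨ s j = 1 ∨ s k = 1)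
    (i : ℕ) : ∃ j, i < j ∧ j ≤ i + 3 ∧ pad 1 s j = 1 := by
  obtain hin | hni := lt_or_ge (i + 2) n
  · have hpad (j : Fin n) (hj : s j = 1) : pad 1 s (j + 1) = 1 := (pad_add_one 1 s j).trans hj
    obtain h₀ | h₁ | h₂ := hones ⟨i, by omega⟩ ⟨i + 1, by omega⟩ ⟨i + 2, hin⟩ rfl rfl
    · exact ⟨i + 1, by omega, by omega, hpad _ h₀⟩
    · exact ⟨i + 2, by omega, by omega, hpad _ h₁⟩
    · exact ⟨i + 3, by omega, by omega, hpad _ h₂⟩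
  · exact ⟨i + 3, by omega, by omega, pad_eq_of_lt 1 s (by omega)⟩

theorem isLevel_of_isLevelOn (hs : ∀ i, 0 < s i) (h : IsLevelOn (pad 1 s) 0 (n + 1)) :
    IsLevel n s := by
  obtain ⟨K, hK⟩ := h
  have hexists (X) (hX : IsStrictChain (pad 1 s) X 0 (n + 1)) : ∃ c ∈ lhpConeInteriorZ n s,
      c (Fin.last n) = K ∧ IsWeakChain (pad 1 s) (X - pad 0 c) 0 (n + 1) := by
    obtain ⟨C, hC, hCK, hXC⟩ := hK X hX
    obtain ⟨c, hc, hCc⟩ := exists_mem_lhpConeInteriorZ_eqOn hs hC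
    refine ⟨c, hc, ?_, hXC.congr (Nat.zero_le _) fun k hk ↦ by simp [hCc hk]⟩
    rw [← hCK, hCc (Set.right_mem_Icc.2 (Nat.zero_le _))]
    exact (pad_add_one 0 c (Fin.last n)).symm
  have hfin := finite_lhpConeInteriorZ_last_eq hs K
  refine ⟨hfin.toFinset, ?_, fun c hc c' hc' ↦ ?_, Set.ext fun x ↦ ?_⟩
  · obtain ⟨X, hX⟩ := exists_isStrictChain (pad_one_pos hs) 0 (n + 1)
    obtain ⟨c, hc, hcK, -⟩ := hexists X hX
    exact ⟨c, hfin.mem_toFinset.2 ⟨hc, hcK⟩⟩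
  · exact (hfin.mem_toFinset.1 hc).2.trans (hfin.mem_toFinset.1 hc').2.symm
  · simp only [Set.mem_iUnion, Set.mem_image, hfin.mem_toFinset]
    constructor
    · rintro ⟨c, ⟨hc, -⟩, y, hy, rfl⟩
      exact add_mem_lhpConeInteriorZ hs hc hy
    · intro hx
      obtain ⟨c, hc, hcK, hxc⟩ := hexists _ ((mem_lhpConeInteriorZ_iff hs).1 hx)
      rw [← pad_zero_sub, ← mem_lhpConeZ_iff hs] at hxc
      exact ⟨c, ⟨hc, hcK⟩, x - c, hxc, add_sub_cancel c x⟩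

end Cone

end LectureHall

theorem lhp_level_of_ones_mod_three_general (n : ℕ) (s : Fin n → ℤ) (hs : ∀ i, 0 < s i)
    (hones : ∀ i j k : Fin n,
      (j : ℕ) = i + 1 → (k : ℕ) = i + 2 → s i = 1 ∨ s j = 1 ∨ s k = 1) :
    IsLevel n s :=
  LectureHall.isLevel_of_isLevelOn hs <|
    LectureHall.isLevelOn_of_forall_exists_eq_one (LectureHall.pad_one_pos hs)
      (LectureHall.exists_pad_one_eq_one hones) (Nat.zero_le _) rfl
      (LectureHall.pad_eq_of_lt 1 s n.lt_succ_self)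

theorem lhp_level_of_ones_mod_three (n : ℕ) (s : Fin n → ℤ)
    (hs : ∀ i, 0 < s i)
    (h3 : ∀ i : Fin n, ((i : ℕ) + 1) % 3 = 0 → s i = 1) :
    IsLevel n s :=
  lhp_level_of_ones_mod_three_general n s hs fun i j k hij hik ↦
    (by omega : (i + 1 : ℕ) % 3 = 0 ∨ (j + 1 : ℕ) % 3 = 0 ∨ (k + 1 : ℕ) % 3 = 0).imp
      (h3 i) (.imp (h3 j) (h3 k))
end

section
/- Let s = (s_1,…,s_n) be a sequence of positive integers with gcd(s_{i−1}, s_i) = 1 for some 1 < i ≤ n, let ←s = (s_n,…,s_1), and suppose c, d ∈ ℤ^n satisfy c_1 = d_1 = 1, c_j·s_{j−1} = c_{j−1}·s_j + gcd(s_{j−1}, s_j) for all 2 ≤ j ≤ n, and d_j·(←s)_{j−1} = d_{j−1}·(←s)_j + gcd((←s)_{j−1}, (←s)_j) for all 2 ≤ j ≤ n. Then s_{n−j+1} divides d_j + c_{n−j+1} for every 1 ≤ j ≤ n. -/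
open scoped BigOperators

/-!
Put `f i = d i.rev + c i`. Adding the recurrence of `c` to the reversed recurrence of `d` cancels
the `gcd` terms and leaves `f i * s j = f j * s i` for consecutive `i`, `j`. Hence the ratio `f / s`
is constant, and a linear combination `∑ aᵢ sᵢ = 1` gives `f k = f k * ∑ aᵢ sᵢ = (∑ aᵢ fᵢ) * s k`.
-/

section CrossMul

variable {ι R : Type*}

theorem cross_mul_eq_of_forall_covBy [CommSemigroup R] [LinearOrder ι] [LocallyFiniteOrder ι]
    {s f : ι → R} (hs : ∀ i, IsRegular (s i))
    (hcov : ∀ i j, i ⋖ j → f i * s j = f j * s i) (i j : ι) : f i * s j = f j * s i := by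
  wlog hij : i ≤ j generalizing i j
  · exact (this j i (le_of_not_ge hij)).symm
  have hchain : Relation.ReflTransGen (· ⋖ ·) i j := le_iff_reflTransGen_covBy.mp hij
  clear hij
  induction hchain with
  | refl => rfl
  | @tail k l _ hkl ih =>
    refine (hs k).right ?_
    calc f i * s l * s k = f i * s k * s l := mul_right_comm ..
      _ = f k * s l * s i := by rw [ih, mul_right_comm]
      _ = f l * s i * s k := by rw [hcov k l hkl, mul_right_comm]

variable [CommSemiring R] {s f : ι → R}

theorem dvd_of_cross_mul_eq_of_span_range_eq_top (hspan : Ideal.span (Set.range s) = ⊤)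
    (hcross : ∀ i j, f i * s j = f j * s i) (i : ι) : s i ∣ f i := by
  have hmem : (1 : R) ∈ Ideal.span (Set.range s) := hspan ▸ Submodule.mem_top
  suffices h : ∀ x ∈ Ideal.span (Set.range s), s i ∣ f i * x by simpa using h 1 hmem
  intro x hx
  induction hx using Submodule.span_induction with
  | mem x hx =>
    obtain ⟨j, rfl⟩ := hx
    exact hcross i j ▸ dvd_mul_left _ _
  | zero => simp
  | add x y _ _ hx hy => exact mul_add (f i) x y ▸ dvd_add hx hy
  | smul a x _ hx => exact mul_left_comm (f i) a x ▸ hx.mul_left a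

theorem span_range_eq_top_of_isCoprime {i j : ι} (h : IsCoprime (s i) (s j)) :
    Ideal.span (Set.range s) = ⊤ := by
  obtain ⟨a, b, hab⟩ := h
  rw [Ideal.eq_top_iff_one, ← hab]
  exact add_mem (Ideal.mul_mem_left _ a Ideal.mem_span_range_self)
    (Ideal.mul_mem_left _ b Ideal.mem_span_range_self)

end CrossMul

theorem cd_divisibility_general {R : Type*} [CommSemiring R] {n : ℕ} {s c d : Fin n → R}
    {g : Fin n → Fin n → R} (hs : ∀ i, IsRegular (s i))
    (hspan : Ideal.span (Set.range s) = ⊤)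
    (hc : ∀ k j : Fin n, (j : ℕ) = (k : ℕ) + 1 → c j * s k = c k * s j + g k j)
    (hd : ∀ k j : Fin n, (j : ℕ) = (k : ℕ) + 1 →
      d j * s k.rev = d k * s j.rev + g j.rev k.rev) (j : Fin n) :
    s j.rev ∣ d j + c j.rev := by
  have hcross : ∀ i j, (d i.rev + c i) * s j = (d j.rev + c j) * s i := by
    refine cross_mul_eq_of_forall_covBy hs fun i j hij ↦ ?_
    have hval : (j : ℕ) = i + 1 := (Nat.covBy_iff_add_one_eq.mp hij.coe_fin).symm
    have hdrev : d i.rev * s j = d j.rev * s i + g i j := by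
      simpa only [Fin.rev_rev] using hd j.rev i.rev (by simp only [Fin.val_rev]; lia)
    calc (d i.rev + c i) * s j = d j.rev * s i + (c i * s j + g i j) := by
          rw [add_mul, hdrev, add_assoc, add_comm (g i j)]
      _ = (d j.rev + c j) * s i := by rw [← hc i j hval, add_mul]
  simpa only [Fin.rev_rev] using
    dvd_of_cross_mul_eq_of_span_range_eq_top hspan hcross j.rev

theorem cd_divisibility (n : ℕ) (s : Fin n → ℤ) (hs : ∀ i, 0 < s i)
    (hcop : ∃ k j : Fin n, (j : ℕ) = (k : ℕ) + 1 ∧ Int.gcd (s k) (s j) = 1)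
    (c d : Fin n → ℤ)
    (hc1 : ∀ i : Fin n, (i : ℕ) = 0 → c i = 1)
    (hd1 : ∀ i : Fin n, (i : ℕ) = 0 → d i = 1)
    (hc : ∀ k j : Fin n, (j : ℕ) = (k : ℕ) + 1 →
      c j * s k = c k * s j + (Int.gcd (s k) (s j) : ℤ))
    (hd : ∀ k j : Fin n, (j : ℕ) = (k : ℕ) + 1 →
      d j * s k.rev = d k * s j.rev + (Int.gcd (s k.rev) (s j.rev) : ℤ)) :
    ∀ j : ℕ, (h₁ : 1 ≤ j) → (h₂ : j ≤ n) →
      s ⟨n - j, by omega⟩ ∣ (d ⟨j - 1, by omega⟩ + c ⟨n - j, by omega⟩) := by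
  obtain ⟨k, l, -, hkl⟩ := hcop
  have hspan := span_range_eq_top_of_isCoprime (Int.isCoprime_iff_gcd_eq_one.mpr hkl)
  rintro (_ | j) h₁ h₂
  · lia
  exact cd_divisibility_general (g := fun i j ↦ ((s i).gcd (s j) : ℤ))
    (fun i ↦ .of_ne_zero (hs i).ne') hspan hc
    (by simpa only [Int.gcd_comm] using hd) ⟨j, h₂⟩
end
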